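/- Let p be prime and let ℤ_p act freely by linear isometries on spheres S^n and S^m with n > m. Then there is no ℤ_p-equivariant continuous map from S^n to S^m. -/

import Mathlib

open Metric

/-!
Let `K = dim W < dim V` and let `t` be the action of a generator of `ℤ/p`. Coning from generic
points, one builds in `V ∖ {0}` chains `z₀, …, z_K` such that `z₀` is a point, `∂ z₁ = (t - 1) z₀`,
`∂ z₂ = (1 + t + ⋯ + t ^ (p - 1)) z₁`, and so on alternately. An equivariant map to the unit sphere
of `W` carries this tower to `W`. There, each point `x` is labelled equivariantly with the affine
span of those points of a finite invariant set `U` which nearly maximize `⟪x, ·⟫`; the tolerances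
are chosen so that these spans avoid the origin and so that nearby points have comparable labels.
Hence, after a fine subdivision, a further subdivision yields a tower whose simplices are decreasing
sequences of nonempty affine subspaces avoiding the origin, and on these `t` acts freely. A homology
computation in characteristic `p` shows that a tower of height `K` on a free complex has a
nondegenerate simplex with `K + 1` vertices, whereas a strictly decreasing sequence of nonempty
proper affine subspaces of `W` has at most `K` terms.
-/

open Finset Finsupp Function Module

/-! ### Cyclic differentials -/

section FreeModule

variable {α R M : Type*} [Semiring R] [AddCommMonoid M] [Module R M] {P : Set α} {z : α →₀ R}

theorem supported_le_comap {A : (α →₀ R) →ₗ[R] M} {Q : Submodule R M}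
    (h : ∀ a ∈ P, A (single a 1) ∈ Q) : supported R R P ≤ Q.comap A := by
  rw [supported_eq_span_single]
  exact Submodule.span_le.2 (Set.forall_mem_image.2 h)

theorem map_mem_of_mem_supported {A : (α →₀ R) →ₗ[R] M} {Q : Submodule R M}
    (h : ∀ a ∈ P, A (single a 1) ∈ Q) (hz : z ∈ supported R R P) : A z ∈ Q :=
  supported_le_comap h hz

theorem map_eq_map_of_mem_supported {A B : (α →₀ R) →ₗ[R] M}
    (h : ∀ a ∈ P, A (single a 1) = B (single a 1)) (hz : z ∈ supported R R P) : A z = B z := by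
  rw [supported_eq_span_single] at hz
  exact LinearMap.eqOn_span (Set.forall_mem_image.2 h) hz

end FreeModule

/-- The differentials of the standard periodic resolution of `ℤ/p` with generator `t`:
alternately `t - 1` and the norm `1 + t + ⋯ + t ^ (p - 1)`. -/
def cyclicDifferential {A : Type*} [Ring A] (p : ℕ) (t : A) (k : ℕ) : A :=
  if Even k then t - 1 else ∑ j ∈ range p, t ^ j

section CyclicDifferential

variable {A : Type*} [Ring A] {p k : ℕ} {t : A}

theorem cyclicDifferential_of_even (hk : Even k) : cyclicDifferential p t k = t - 1 :=
  if_pos hk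

theorem cyclicDifferential_of_odd (hk : Odd k) :
    cyclicDifferential p t k = ∑ j ∈ range p, t ^ j :=
  if_neg (Nat.not_even_iff_odd.2 hk)

theorem cyclicDifferential_add_two : cyclicDifferential p t (k + 2) = cyclicDifferential p t k := by
  simp only [cyclicDifferential, Nat.even_add, even_two, iff_true]

theorem cyclicDifferential_succ_mul (ht : t ^ p = 1) :
    cyclicDifferential p t (k + 1) * cyclicDifferential p t k = 0 := by
  rcases Nat.even_or_odd k with hk | hk
  · rw [cyclicDifferential_of_odd hk.add_one, cyclicDifferential_of_even hk, geom_sum_mul, ht,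
      sub_self]
  · rw [cyclicDifferential_of_even hk.add_one, cyclicDifferential_of_odd hk, mul_geom_sum, ht,
      sub_self]

theorem sum_pow_sub_eq_geom_sum (ht : t ^ p = 1) :
    ∑ j ∈ range p, t ^ (p - j) = ∑ j ∈ range p, t ^ j := by
  have reflect : ∑ j ∈ range p, t ^ (p - j) = ∑ j ∈ range p, t ^ (j + 1) := by
    rw [← sum_range_reflect]
    refine sum_congr rfl fun j hj => congrArg (t ^ ·) ?_
    have := mem_range.1 hj
    omega
  have shift := (sum_range_succ' (t ^ ·) p).symm.trans (sum_range_succ (t ^ ·) p)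
  rw [reflect]
  simpa only [ht, pow_zero, add_left_inj] using shift

variable {R M N : Type*} [Ring R] [AddCommGroup M] [Module R M] [AddCommGroup N] [Module R N]

theorem map_cyclicDifferential {T : End R M} {T' : End R N} {f : M →ₗ[R] N}
    (hf : ∀ x, f (T x) = T' (f x)) (x : M) :
    f (cyclicDifferential p T k x) = cyclicDifferential p T' k (f x) := by
  have hpow (j : ℕ) : f ((T ^ j) x) = (T' ^ j) (f x) :=
    LinearMap.congr_fun (Module.End.commute_pow_left_of_commute (LinearMap.ext hf).symm j).symm x
  rcases Nat.even_or_odd k with hk | hk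
  · simp [cyclicDifferential_of_even hk, hf]
  · simp [cyclicDifferential_of_odd hk, hpow]

theorem pow_apply_mem {T : End R M} {C : Submodule R M} (hT : C ≤ C.comap T) (j : ℕ) {x : M}
    (hx : x ∈ C) : (T ^ j) x ∈ C := by
  rw [Module.End.pow_apply]
  exact (show Set.MapsTo T C C from fun _ h => hT h).iterate j hx

theorem cyclicDifferential_apply_mem {T : End R M} {C : Submodule R M} (hT : C ≤ C.comap T)
    {x : M} (hx : x ∈ C) : cyclicDifferential p T k x ∈ C := by
  rcases Nat.even_or_odd k with hk | hk
  · simpa [cyclicDifferential_of_even hk] using C.sub_mem (hT hx) hx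
  · simpa [cyclicDifferential_of_odd hk] using C.sum_mem fun j _ => pow_apply_mem hT j hx

/-- `e` plays the role of the projection of a free module onto the span of a basis. -/
theorem exists_sub_cyclicDifferential_mem {T e : End R M} {C D : Submodule R M}
    (hTC : C ≤ C.comap T) (hTD : D ≤ D.comap T) (heC : C ≤ C.comap e) (heD : D ≤ D.comap e)
    (hT : T ^ p = 1) {z : M} (hz : z ∈ C)
    (hez : ∑ j ∈ range p, (T ^ (p - j)) (e ((T ^ j) z)) = z)
    (h : cyclicDifferential p T k z ∈ D) :
    ∃ w ∈ C, z - cyclicDifferential p T (k + 1) w ∈ D := by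
  rcases Nat.even_or_odd k with hk | hk
  · rw [cyclicDifferential_of_even hk] at h
    have hpow (j : ℕ) : (T ^ j) z - z ∈ D := by
      have : (T ^ j - 1) z = (∑ i ∈ range j, T ^ i) ((T - 1) z) := by
        rw [← geom_sum_mul]
        rfl
      rw [show (T ^ j) z - z = (T ^ j - 1) z from rfl, this, LinearMap.sum_apply]
      exact D.sum_mem fun i _ => pow_apply_mem hTD i h
    have hnorm : z - (∑ j ∈ range p, T ^ j) (e z) =
        ∑ j ∈ range p, (T ^ (p - j)) (e ((T ^ j) z - z)) := by
      rw [← sum_pow_sub_eq_geom_sum hT]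
      simp only [LinearMap.sum_apply, map_sub, sum_sub_distrib, hez]
    refine ⟨e z, heC hz, ?_⟩
    rw [cyclicDifferential_of_odd hk.add_one, hnorm]
    exact D.sum_mem fun j _ => pow_apply_mem hTD _ (heD (hpow j))
  · rw [cyclicDifferential_of_odd hk, LinearMap.sum_apply] at h
    refine ⟨∑ j ∈ range p, (∑ i ∈ range (p - j), T ^ i) (e ((T ^ j) z)), ?_, ?_⟩
    · refine C.sum_mem fun j _ => ?_
      rw [LinearMap.sum_apply]
      exact C.sum_mem fun i _ => pow_apply_mem hTC i (heC (pow_apply_mem hTC j hz))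
    · have telescope (n : ℕ) (x : M) : (T - 1) ((∑ i ∈ range n, T ^ i) x) = (T ^ n) x - x :=
        LinearMap.congr_fun (mul_geom_sum T n) x
      rw [cyclicDifferential_of_even hk.add_one]
      simp only [map_sum, telescope, sum_sub_distrib, hez, sub_sub_cancel]
      rw [← map_sum]
      exact heD h

end CyclicDifferential

section Transversal

variable {α : Type*} {τ : α → α}

theorem exists_transversal (τ : α → α) :
    ∃ S : Set α, ∀ x ∈ periodicPts τ, ∃! j, j < minimalPeriod τ x ∧ τ^[j] x ∈ S := by
  have choice (s : Cycle α) (hs : ∃ y, y ∈ s) : ∃ y, y ∈ s := hs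
  choose c hc using choice
  refine ⟨{b | ∃ hb, c (periodicOrbit τ b) hb = b}, fun x hx => ?_⟩
  have hne : ∃ y, y ∈ periodicOrbit τ x := ⟨x, self_mem_periodicOrbit hx⟩
  have mem_iff (j : ℕ) : τ^[j] x ∈ {b | ∃ hb, c (periodicOrbit τ b) hb = b} ↔
      c (periodicOrbit τ x) hne = τ^[j] x := by
    simp only [Set.mem_ofPred_eq, periodicOrbit_apply_iterate_eq hx, hne, exists_true_left]
  simp only [mem_iff]
  obtain ⟨n, hn⟩ := (mem_periodicOrbit_iff hx).1 (hc _ hne)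
  refine ⟨n % minimalPeriod τ x, ⟨Nat.mod_lt _ (minimalPeriod_pos_of_mem_periodicPts hx), ?_⟩,
    fun j hj => ?_⟩
  · rw [iterate_mod_minimalPeriod_eq, hn]
  · refine iterate_injOn_Iio_minimalPeriod hj.1
      (Nat.mod_lt _ (minimalPeriod_pos_of_mem_periodicPts hx)) ?_
    simp only [iterate_mod_minimalPeriod_eq, hn, ← hj.2]

variable {R : Type*} [Ring R] {p : ℕ} {T : End R (α →₀ R)}

theorem pow_apply_single (hT : ∀ a, T (single a 1) = single (τ a) 1) (j : ℕ) (a : α) :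
    (T ^ j) (single a 1) = single (τ^[j] a) 1 := by
  induction j generalizing a with
  | zero => rfl
  | succ j ih => rw [pow_succ, Module.End.mul_apply, hT, ih, iterate_succ_apply]

theorem pow_eq_one_of_iterate_eq_id (hT : ∀ a, T (single a 1) = single (τ a) 1)
    (hτ : τ^[p] = id) : T ^ p = 1 := by
  ext a : 2
  simp [pow_apply_single hT, hτ]

theorem exists_transversal_projection (hT : ∀ a, T (single a 1) = single (τ a) 1)
    (hτ : τ^[p] = id) (hp : p ≠ 0) :
    ∃ e : End R (α →₀ R), (∀ a, e (single a 1) = single a 1 ∨ e (single a 1) = 0) ∧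
      ∀ z ∈ supported R R {a | minimalPeriod τ a = p},
        ∑ j ∈ range p, (T ^ (p - j)) (e ((T ^ j) z)) = z := by
  classical
  obtain ⟨S, hS⟩ := exists_transversal τ
  let e : End R (α →₀ R) := linearCombination R fun a => if a ∈ S then single a 1 else 0
  have he (a : α) : e (single a 1) = if a ∈ S then single a 1 else 0 := by simp [e]
  refine ⟨e, fun a => by rw [he]; split_ifs <;> simp, fun z hz => ?_⟩
  suffices ∀ a ∈ {a | minimalPeriod τ a = p},
      (∑ j ∈ range p, T ^ (p - j) * e * T ^ j) (single a 1) = LinearMap.id (single a 1) by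
    simpa using map_eq_map_of_mem_supported this hz
  intro a ha
  have hper : IsPeriodicPt τ p a := congrFun hτ a
  obtain ⟨i, ⟨hi, hiS⟩, huniq⟩ := hS a ⟨p, Nat.pos_of_ne_zero hp, hper⟩
  rw [ha] at hi huniq
  have term (j : ℕ) (hj : j ∈ range p) :
      (T ^ (p - j)) (e ((T ^ j) (single a 1))) = if j = i then single a 1 else 0 := by
    have hmem : τ^[j] a ∈ S ↔ j = i :=
      ⟨fun h => huniq j ⟨mem_range.1 hj, h⟩, fun h => h ▸ hiS⟩
    rw [pow_apply_single hT, he]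
    simp only [hmem]
    split_ifs
    · rw [pow_apply_single hT, ← iterate_add_apply, Nat.sub_add_cancel (mem_range.1 hj).le, hper]
    · rw [map_zero]
  simp only [LinearMap.sum_apply, Module.End.mul_apply, sum_congr rfl term, Finset.sum_ite_eq',
    mem_range, hi, if_true, LinearMap.id_apply]

end Transversal

/-! ### Augmented ordered chains -/

/-- Augmented ordered chains on `X`: the list `[x₀, …, xₖ]` is a possibly degenerate ordered
`k`-simplex, and the empty list spans the augmentation, in degree `-1`. -/
abbrev OrderedChain (R X : Type*) [Ring R] := List X →₀ R

namespace OrderedChain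

variable {R X Y : Type*} [Ring R]

/-- The join of a chain with an apex `x`, put in front of every simplex. -/
noncomputable def cone (x : X) : OrderedChain R X →ₗ[R] OrderedChain R X :=
  lmapDomain R R (List.cons x)

/-- The alternating sum of the faces of a simplex. -/
noncomputable def faceSum : List X → OrderedChain R X
  | [] => 0
  | x :: l => single l 1 - cone x (faceSum l)

/-- The boundary operator of the augmented ordered chain complex. -/
noncomputable def boundary : OrderedChain R X →ₗ[R] OrderedChain R X :=
  linearCombination R faceSum

/-- The chain map induced by a map of vertices. -/
noncomputable def map (f : X → Y) : OrderedChain R X →ₗ[R] OrderedChain R Y :=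
  lmapDomain R R (List.map f)

variable (R) in
/-- The chains all of whose simplices belong to `P` and have `n` vertices. -/
def chains (P : Set (List X)) (n : ℕ) : Submodule R (OrderedChain R X) :=
  supported R R {l | l ∈ P ∧ l.length = n}

@[simp]
theorem cone_single (x : X) (l : List X) (r : R) : cone x (single l r) = single (x :: l) r :=
  mapDomain_single

@[simp]
theorem map_single (f : X → Y) (l : List X) (r : R) : map f (single l r) = single (l.map f) r :=
  mapDomain_single

@[simp]
theorem boundary_single_nil : boundary (single ([] : List X) (1 : R)) = 0 := by
  simp [boundary, faceSum]

theorem boundary_single_cons (x : X) (l : List X) :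
    boundary (single (x :: l) (1 : R)) = single l 1 - cone x (boundary (single l 1)) := by
  simp [boundary, faceSum]

theorem boundary_cone (x : X) (z : OrderedChain R X) :
    boundary (cone x z) = z - cone x (boundary z) := by
  suffices boundary ∘ₗ cone x = LinearMap.id - cone (R := R) x ∘ₗ boundary from
    LinearMap.congr_fun this z
  ext l : 2
  simp [boundary_single_cons]

theorem boundary_boundary (z : OrderedChain R X) : boundary (boundary z) = 0 := by
  suffices boundary ∘ₗ boundary = (0 : OrderedChain R X →ₗ[R] OrderedChain R X) from
    LinearMap.congr_fun this z
  ext l : 2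
  induction l with
  | nil => simp
  | cons x l ih =>
    have ih' : boundary (boundary (single l (1 : R))) = 0 := by simpa using ih
    simp [boundary_single_cons, boundary_cone, ih']

theorem map_cone (f : X → Y) (x : X) (z : OrderedChain R X) :
    map f (cone x z) = cone (f x) (map f z) := by
  suffices map f ∘ₗ cone x = cone (R := R) (f x) ∘ₗ map f from LinearMap.congr_fun this z
  ext l : 2
  simp

theorem boundary_map (f : X → Y) (z : OrderedChain R X) :
    boundary (map f z) = map f (boundary z) := by
  suffices boundary ∘ₗ map f = map (R := R) f ∘ₗ boundary from LinearMap.congr_fun this z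
  ext l : 2
  induction l with
  | nil => simp
  | cons x l ih =>
    have ih' : boundary (single (l.map f) (1 : R)) = map f (boundary (single l 1)) := by
      simpa using ih
    simp [boundary_single_cons, map_cone, ih']

theorem iterate_list_map (t : X → X) (j : ℕ) : (List.map t)^[j] = List.map t^[j] := by
  induction j with
  | zero => exact List.map_id_fun.symm
  | succ j ih => rw [iterate_succ, iterate_succ, ih, List.map_comp_map]

theorem map_pow_eq_one {t : X → X} {p : ℕ} (ht : t^[p] = id) :
    (map t : End R (OrderedChain R X)) ^ p = 1 :=
  pow_eq_one_of_iterate_eq_id (fun l => map_single t l 1)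
    (by rw [iterate_list_map, ht, List.map_id_fun])

theorem boundary_single_mem (l : List X) :
    boundary (single l (1 : R)) ∈ chains R {l' | l'.Sublist l} (l.length - 1) := by
  induction l with
  | nil => simp
  | cons x l ih =>
    rw [boundary_single_cons]
    refine Submodule.sub_mem _ (single_mem_supported _ _ ⟨List.sublist_cons_self x l, rfl⟩) ?_
    cases l with
    | nil => simp
    | cons y l =>
      refine map_mem_of_mem_supported (fun l' hl' => ?_) ih
      rw [cone_single]
      exact single_mem_supported _ _ ⟨hl'.1.cons_cons x, by simp [hl'.2]⟩

variable {P : Set (List X)} {Q : Set (List Y)} {n : ℕ} {z : OrderedChain R X}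

theorem chains_mono {P' : Set (List X)} (h : P ⊆ P') : chains R P n ≤ chains R P' n :=
  supported_mono fun _ hl => ⟨h hl.1, hl.2⟩

theorem single_mem_chains {l : List X} (hl : l ∈ P) (hn : l.length = n) (r : R) :
    single l r ∈ chains R P n :=
  single_mem_supported _ _ ⟨hl, hn⟩

theorem boundary_mem_chains (hP : ∀ l ∈ P, ∀ l', l'.Sublist l → l' ∈ P)
    (hz : z ∈ chains R P (n + 1)) : boundary z ∈ chains R P n := by
  refine map_mem_of_mem_supported (fun l hl => ?_) hz
  have := boundary_single_mem (R := R) l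
  rw [hl.2] at this
  exact chains_mono (fun l' hl' => hP l hl.1 l' hl') this

theorem chains_le_comap_map {f : X → Y} (hf : ∀ l ∈ P, l.map f ∈ Q) :
    chains R P n ≤ (chains R Q n).comap (map f) := by
  refine supported_le_comap fun l hl => ?_
  rw [map_single]
  exact single_mem_chains (hf l hl.1) (by rw [List.length_map, hl.2]) 1

theorem cone_mem_chains {P' : Set (List X)} {x : X} (hx : ∀ l ∈ P, x :: l ∈ P')
    (hz : z ∈ chains R P n) : cone x z ∈ chains R P' (n + 1) := by
  refine map_mem_of_mem_supported (fun l hl => ?_) hz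
  rw [cone_single]
  exact single_mem_chains (hx l hl.1) (by rw [List.length_cons, hl.2]) 1

/-- A simplex is degenerate if two consecutive vertices coincide. -/
inductive IsDegenerate : List X → Prop
  | head (x : X) (l : List X) : IsDegenerate (x :: x :: l)
  | cons (x : X) {l : List X} : IsDegenerate l → IsDegenerate (x :: l)

theorem IsDegenerate.map {l : List X} (h : IsDegenerate l) (f : X → Y) :
    IsDegenerate (l.map f) := by
  induction h with
  | head x l => exact .head (f x) _
  | cons x _ ih => exact .cons (f x) ih

theorem IsDegenerate.two_le_length {l : List X} (h : IsDegenerate l) : 2 ≤ l.length := by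
  induction h with
  | head _ l => simp
  | cons x _ ih => exact ih.trans (Nat.le_succ _)

variable (R X) in
/-- The chains all of whose simplices are degenerate. -/
def degenerateChains : Submodule R (OrderedChain R X) :=
  supported R R {l | IsDegenerate l}

theorem IsDegenerate.single_mem {l : List X} (h : IsDegenerate l) (r : R) :
    single l r ∈ degenerateChains R X :=
  single_mem_supported _ _ h

theorem degenerateChains_le_comap_map (f : X → Y) :
    degenerateChains R X ≤ (degenerateChains R Y).comap (map f) := by
  refine supported_le_comap fun l hl => ?_
  rw [map_single]
  exact (hl.map f).single_mem 1

theorem cone_mem_degenerateChains (x : X) (hz : z ∈ degenerateChains R X) :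
    cone x z ∈ degenerateChains R X := by
  refine map_mem_of_mem_supported (fun l hl => ?_) hz
  rw [cone_single]
  exact (IsDegenerate.cons x hl).single_mem 1

theorem IsDegenerate.boundary_single_mem {l : List X} (h : IsDegenerate l) :
    boundary (single l (1 : R)) ∈ degenerateChains R X := by
  induction h with
  | head x l =>
    -- The faces opposite to the two equal vertices cancel.
    have : boundary (single (x :: x :: l) (1 : R)) = cone x (cone x (boundary (single l 1))) := by
      simp [boundary_single_cons]
    rw [this]
    refine map_mem_of_mem_supported (A := cone x ∘ₗ cone x) (fun l' _ => ?_)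
      (OrderedChain.boundary_single_mem l)
    rw [LinearMap.comp_apply, cone_single, cone_single]
    exact (IsDegenerate.head x l').single_mem 1
  | cons x hl ih =>
    rw [boundary_single_cons]
    exact Submodule.sub_mem _ (hl.single_mem 1) (cone_mem_degenerateChains x ih)

theorem boundary_mem_degenerateChains (hz : z ∈ degenerateChains R X) :
    boundary z ∈ degenerateChains R X :=
  map_mem_of_mem_supported (fun _ hl => hl.boundary_single_mem) hz

theorem eq_zero_of_mem_degenerateChains (hz : z ∈ chains R P 1)
    (hdeg : z ∈ degenerateChains R X) : z = 0 := by
  refine support_eq_empty.1 (Finset.eq_empty_of_forall_notMem fun l hl => ?_)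
  have hlen := ((mem_supported _ _).1 hz hl).2
  have := IsDegenerate.two_le_length ((mem_supported _ _).1 hdeg hl)
  omega

end OrderedChain

/-! ### Subdivisions and towers -/

namespace OrderedChain

variable {R X Y : Type*} [Ring R]

/-- Subdivision of chains on simplices with `n` vertices, where `β l` serves as the barycenter of
the simplex `l`: the subdivision of `l` is the join of `β l` with the subdivided boundary of `l`. -/
noncomputable def subdivision (β : List X → Y) : ℕ → OrderedChain R X →ₗ[R] OrderedChain R Y
  | 0 => linearCombination R fun _ => single [] 1
  | n + 1 => linearCombination R fun l => cone (β l) (subdivision β n (boundary (single l 1)))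

/-- `IsFlag β l L` says that `L` lists the values of `β` along a full flag of faces of the simplex
`l`, starting with `l` itself; these are the simplices of the subdivision of `l`. -/
inductive IsFlag (β : List X → Y) : List X → List Y → Prop
  | nil : IsFlag β [] []
  | cons {l l' : List X} {L : List Y} (hl : l'.Sublist l) (hlen : l'.length + 1 = l.length)
      (hL : IsFlag β l' L) : IsFlag β l (β l :: L)

section Subdivision

variable {β : List X → Y} {n : ℕ} {P : Set (List X)} {z : OrderedChain R X}

theorem subdivision_zero_single (l : List X) :
    subdivision β 0 (single l (1 : R)) = single [] 1 := by
  simp [subdivision]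

theorem subdivision_succ_single (l : List X) :
    subdivision β (n + 1) (single l (1 : R)) =
      cone (β l) (subdivision β n (boundary (single l 1))) := by
  simp [subdivision]

theorem boundary_subdivision (hz : z ∈ chains R P (n + 1)) :
    boundary (subdivision β (n + 1) z) = subdivision β n (boundary z) := by
  induction n generalizing P z with
  | zero =>
    refine map_eq_map_of_mem_supported (A := boundary ∘ₗ subdivision β 1)
      (B := subdivision β 0 ∘ₗ boundary) (fun l hl => ?_) hz
    obtain ⟨x, rfl⟩ := List.length_eq_one_iff.1 hl.2
    simp [subdivision_succ_single, subdivision_zero_single, boundary_single_cons]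
  | succ n ih =>
    refine map_eq_map_of_mem_supported (A := boundary ∘ₗ subdivision β (n + 2))
      (B := subdivision β (n + 1) ∘ₗ boundary) (fun l hl => ?_) hz
    have hfaces := boundary_single_mem (R := R) l
    rw [hl.2] at hfaces
    simp only [LinearMap.comp_apply, subdivision_succ_single l, boundary_cone, ih hfaces,
      boundary_boundary, map_zero, sub_zero]

theorem subdivision_map {t : X → X} {t' : Y → Y} (hβ : ∀ l, β (l.map t) = t' (β l)) (n : ℕ)
    (z : OrderedChain R X) : subdivision β n (map t z) = map t' (subdivision β n z) := by
  induction n generalizing z with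
  | zero =>
    suffices subdivision β 0 ∘ₗ map t = map (R := R) t' ∘ₗ subdivision β 0 from
      LinearMap.congr_fun this z
    ext l : 2
    simp [subdivision_zero_single]
  | succ n ih =>
    suffices subdivision β (n + 1) ∘ₗ map t = map (R := R) t' ∘ₗ subdivision β (n + 1) from
      LinearMap.congr_fun this z
    ext l : 2
    simp [subdivision_succ_single, hβ, map_cone, ← ih, ← boundary_map]

theorem subdivision_single_mem {l : List X} (hl : l.length = n) :
    subdivision β n (single l (1 : R)) ∈ chains R {L | IsFlag β l L} n := by
  induction n generalizing l with
  | zero =>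
    obtain rfl := List.length_eq_zero_iff.1 hl
    rw [subdivision_zero_single]
    exact single_mem_chains .nil rfl 1
  | succ n ih =>
    have hfaces := boundary_single_mem (R := R) l
    rw [hl, Nat.add_sub_cancel] at hfaces
    rw [subdivision_succ_single]
    refine map_mem_of_mem_supported (A := cone (β l) ∘ₗ subdivision β n) (fun l' hl' => ?_) hfaces
    exact cone_mem_chains (fun L hL => .cons hl'.1 (by rw [hl'.2, hl]) hL) (ih hl'.2)

theorem subdivision_mem_chains {P' : Set (List Y)} (hP : ∀ l ∈ P, ∀ L, IsFlag β l L → L ∈ P')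
    (hz : z ∈ chains R P n) : subdivision β n z ∈ chains R P' n :=
  map_mem_of_mem_supported
    (fun l hl => chains_mono (fun L hL => hP l hl.1 L hL) (subdivision_single_mem hl.2)) hz

end Subdivision

variable (R) in
/-- `IsTower R p t P k z` says that `z` is the top of a sequence of chains `z₀, …, zₖ = z` with
simplices in `P` such that `z₀` has augmentation `1` and `∂ zᵢ₊₁` is the image of `zᵢ` under the
`i`-th cyclic differential of `t`. It amounts to a `ℤ/p`-equivariant chain map, in degrees at most
`k`, from the standard periodic resolution of `ℤ/p` to the chains on `P`. -/
inductive IsTower (p : ℕ) (t : X → X) (P : Set (List X)) : ℕ → OrderedChain R X → Prop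
  | base {z : OrderedChain R X} (hz : z ∈ chains R P 1) (hbd : boundary z = single [] 1) :
      IsTower p t P 0 z
  | step {k : ℕ} {z z' : OrderedChain R X} (h : IsTower p t P k z) (hz' : z' ∈ chains R P (k + 2))
      (hbd : boundary z' = cyclicDifferential p (map t) k z) : IsTower p t P (k + 1) z'

section Tower

variable {p k : ℕ} {t : X → X} {P : Set (List X)} {z : OrderedChain R X}

theorem IsTower.mem_chains (h : IsTower R p t P k z) : z ∈ chains R P (k + 1) := by
  cases h <;> assumption

theorem IsTower.mono {P' : Set (List X)} (h : IsTower R p t P k z) (hP : P ⊆ P') :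
    IsTower R p t P' k z := by
  induction h with
  | base hz hbd => exact .base (chains_mono hP hz) hbd
  | step _ hz' hbd ih => exact .step ih (chains_mono hP hz') hbd

theorem IsTower.exists_finite (h : IsTower R p t P k z) :
    ∃ Q ⊆ P, Q.Finite ∧ IsTower R p t Q k z := by
  have mem_support {n : ℕ} {z : OrderedChain R X} (hz : z ∈ chains R P n) :
      z ∈ chains R (z.support : Set (List X)) n :=
    (mem_supported _ _).2 fun l hl => ⟨hl, ((mem_supported _ _).1 hz hl).2⟩
  have support_subset {n : ℕ} {z : OrderedChain R X} (hz : z ∈ chains R P n) :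
      (z.support : Set (List X)) ⊆ P := fun l hl => ((mem_supported _ _).1 hz hl).1
  induction h with
  | base hz hbd => exact ⟨_, support_subset hz, finite_toSet _, .base (mem_support hz) hbd⟩
  | step _ hz' hbd ih =>
    obtain ⟨Q, hQP, hQ, hQtower⟩ := ih
    exact ⟨Q ∪ _, Set.union_subset hQP (support_subset hz'), hQ.union (finite_toSet _),
      .step (hQtower.mono Set.subset_union_left)
        (chains_mono Set.subset_union_right (mem_support hz')) hbd⟩

theorem IsTower.subdivision {β : List X → Y} {t' : Y → Y} {P' : Set (List Y)}
    (h : IsTower R p t P k z) (hβ : ∀ l, β (l.map t) = t' (β l))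
    (hP : ∀ l ∈ P, ∀ L, IsFlag β l L → L ∈ P') :
    IsTower R p t' P' k (subdivision β (k + 1) z) := by
  induction h with
  | base hz hbd =>
    refine .base (subdivision_mem_chains hP hz) ?_
    rw [boundary_subdivision hz, hbd, subdivision_zero_single]
  | step _ hz' hbd ih =>
    refine .step ih (subdivision_mem_chains hP hz') ?_
    rw [boundary_subdivision hz', hbd, map_cyclicDifferential (subdivision_map hβ _)]

theorem cyclicDifferential_boundary (z : OrderedChain R X) :
    boundary (cyclicDifferential p (map t) k z) = cyclicDifferential p (map t) k (boundary z) :=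
  map_cyclicDifferential (M := OrderedChain R X) (boundary_map t) z

theorem norm_boundary_eq_zero [CharP R p] (hz : z ∈ chains R P 1) :
    (∑ j ∈ range p, (map t : End R (OrderedChain R X)) ^ j) (boundary z) = 0 := by
  set N : End R (OrderedChain R X) := ∑ j ∈ range p, map t ^ j
  refine map_eq_map_of_mem_supported (A := N ∘ₗ boundary) (B := 0) (fun l hl => ?_) hz
  obtain ⟨x, rfl⟩ := List.length_eq_one_iff.1 hl.2
  have hpow (j : ℕ) : (map t ^ j) (single [] (1 : R)) = single [] 1 := by
    rw [Module.End.pow_apply]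
    exact iterate_fixed (map_single _ _ _) j
  simp [N, boundary_single_cons, hpow]

end Tower

section Nondegenerate

variable {p K : ℕ} {t : X → X} {P : Set (List X)} {z : OrderedChain R X}

theorem exists_sub_cyclicDifferential_mem_degenerateChains (hp : p ≠ 0) (ht : t^[p] = id)
    (hPt : ∀ l ∈ P, l.map t ∈ P) (hfree : ∀ l ∈ P, l ≠ [] → minimalPeriod (List.map t) l = p)
    {n k : ℕ} (hz : z ∈ chains R P (n + 1))
    (h : cyclicDifferential p (map t) k z ∈ degenerateChains R X) :
    ∃ w ∈ chains R P (n + 1),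
      z - cyclicDifferential p (map t) (k + 1) w ∈ degenerateChains R X := by
  obtain ⟨e, he, hsum⟩ := exists_transversal_projection (fun l => map_single (R := R) t l 1)
    (by rw [iterate_list_map, ht, List.map_id_fun]) hp
  have he_le (Q : Set (List X)) : supported R R Q ≤ (supported R R Q).comap e := by
    refine supported_le_comap fun l hl => ?_
    rcases he l with h | h <;> rw [h]
    exacts [single_mem_supported _ _ hl, Submodule.zero_mem _]
  have hzfree : z ∈ supported R R {l | minimalPeriod (List.map t) l = p} :=
    supported_mono (fun l hl => hfree l hl.1 (List.ne_nil_of_length_eq_add_one hl.2)) hz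
  exact exists_sub_cyclicDifferential_mem (M := OrderedChain R X) (chains_le_comap_map hPt)
    (degenerateChains_le_comap_map t) (he_le _) (he_le _) (map_pow_eq_one ht) hz (hsum z hzfree) h

/-- The chain `y` makes the induction work: the correction to `z` found in one degree becomes the
`y` of the degree below. -/
theorem IsTower.cyclicDifferential_sub_boundary_notMem [Nontrivial R] [CharP R p] (hp : p ≠ 0)
    (ht : t^[p] = id) (hPt : ∀ l ∈ P, l.map t ∈ P)
    (hPsub : ∀ l ∈ P, ∀ l', l'.Sublist l → l' ∈ P)
    (hfree : ∀ l ∈ P, l ≠ [] → minimalPeriod (List.map t) l = p) (h : IsTower R p t P K z)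
    {y : OrderedChain R X} (hy : y ∈ chains R P (K + 2)) :
    cyclicDifferential p (map t) K (z - boundary y) ∉ degenerateChains R X := by
  induction h generalizing y with
  | @base z hz hbd =>
    intro hmem
    have hzy := Submodule.sub_mem _ hz (boundary_mem_chains hPsub hy)
    obtain ⟨w, hw, hdeg⟩ :=
      exists_sub_cyclicDifferential_mem_degenerateChains hp ht hPt hfree hzy hmem
    have hNw : cyclicDifferential p (map t) 1 w ∈ chains R P 1 :=
      cyclicDifferential_apply_mem (M := OrderedChain R X) (chains_le_comap_map hPt) hw
    have hzero : boundary (z - boundary y - cyclicDifferential p (map t) 1 w) = 0 := by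
      rw [eq_zero_of_mem_degenerateChains (Submodule.sub_mem _ hzy hNw) hdeg, map_zero]
    rw [map_sub, map_sub, hbd, boundary_boundary, cyclicDifferential_boundary,
      cyclicDifferential_of_odd odd_one, norm_boundary_eq_zero hw] at hzero
    simp at hzero
  | @step k z z' _ hz' hbd ih =>
    intro hmem
    have hzy := Submodule.sub_mem _ hz' (boundary_mem_chains hPsub hy)
    obtain ⟨w, hw, hdeg⟩ :=
      exists_sub_cyclicDifferential_mem_degenerateChains hp ht hPt hfree hzy hmem
    have := boundary_mem_degenerateChains hdeg
    rw [map_sub, map_sub, hbd, boundary_boundary, sub_zero, cyclicDifferential_boundary,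
      cyclicDifferential_add_two, ← map_sub] at this
    exact ih hw this

theorem IsTower.exists_not_isDegenerate [Nontrivial R] [CharP R p] (hp : p ≠ 0)
    (ht : t^[p] = id) (hPt : ∀ l ∈ P, l.map t ∈ P)
    (hPsub : ∀ l ∈ P, ∀ l', l'.Sublist l → l' ∈ P)
    (hfree : ∀ l ∈ P, l ≠ [] → minimalPeriod (List.map t) l = p) (h : IsTower R p t P K z) :
    ∃ l ∈ P, l.length = K + 1 ∧ ¬ IsDegenerate l := by
  by_contra! hdeg
  have hz : z ∈ degenerateChains R X :=
    supported_mono (fun l hl => hdeg l hl.1 hl.2) h.mem_chains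
  refine h.cyclicDifferential_sub_boundary_notMem hp ht hPt hPsub hfree (Submodule.zero_mem _) ?_
  rw [map_zero, sub_zero]
  exact cyclicDifferential_apply_mem (M := OrderedChain R X) (degenerateChains_le_comap_map t) hz

end Nondegenerate

end OrderedChain

/-! ### Barycenters and the tower in `V ∖ {0}` -/

section Hull

variable {V : Type*} [AddCommGroup V] [Module ℝ V]

theorem zero_notMem_convexHull_insert {s : Set V} {c : V} (hc : c ∉ Submodule.span ℝ s)
    (hs : (0 : V) ∉ convexHull ℝ s) : (0 : V) ∉ convexHull ℝ (insert c s) := by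
  rcases s.eq_empty_or_nonempty with rfl | hne
  · simpa [eq_comm] using hc
  rw [convexHull_insert hne, mem_convexJoin]
  rintro ⟨_, rfl, y, hy, a, b, -, -, hab, h⟩
  have hy' : y ∈ Submodule.span ℝ s := convexHull_min Submodule.subset_span
    (Submodule.convex _) hy
  by_cases ha : a = 0
  · obtain rfl : b = 1 := by linarith
    obtain rfl : y = 0 := by simpa [ha] using h
    exact hs hy
  · refine hc ((Submodule.smul_mem_iff _ ha).1 ?_)
    rw [eq_neg_of_add_eq_zero_left h]
    exact Submodule.neg_mem _ (Submodule.smul_mem _ b hy')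

theorem zero_notMem_convexHull_map {T : V ≃ₗ[ℝ] V} {l : List V}
    (hl : (0 : V) ∉ convexHull ℝ {v | v ∈ l}) : (0 : V) ∉ convexHull ℝ {v | v ∈ l.map T} := by
  have himage : {v | v ∈ l.map T} = T.toLinearMap '' {v | v ∈ l} := by ext; simp
  rw [himage, ← LinearMap.image_convexHull]
  rintro ⟨v, hv, hv0⟩
  obtain rfl : v = 0 := by simpa using hv0
  exact hl hv

theorem exists_forall_notMem_span {Q : Finset (List V)} (hQ : ∀ l ∈ Q, l.length < finrank ℝ V) :
    ∃ c : V, ∀ l ∈ Q, c ∉ Submodule.span ℝ {v | v ∈ l} := by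
  classical
  have htop : (⊤ : Submodule ℝ V) ∉ Q.image fun l => Submodule.span ℝ {v | v ∈ l} := by
    intro h
    obtain ⟨l, hl, hspan⟩ := mem_image.1 h
    have hcard := (finrank_span_finset_le_card (R := ℝ) l.toFinset).trans l.toFinset_card_le
    rw [Set.finrank, List.coe_toFinset, hspan, finrank_top] at hcard
    exact hcard.not_gt (hQ l hl)
  obtain ⟨c, hc⟩ := (Set.ne_univ_iff_exists_notMem _).1
    (Subspace.biUnion_ne_univ_of_top_notMem htop)
  exact ⟨c, fun l hl hcl => hc (Set.mem_biUnion (mem_image_of_mem _ hl) hcl)⟩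

/-- The barycenter of the vertices of a simplex, with the junk value `0` for the empty simplex. -/
noncomputable def barycenter (l : List V) : V :=
  (l.length : ℝ)⁻¹ • l.sum

theorem barycenter_map (T : V →ₗ[ℝ] V) (l : List V) :
    barycenter (l.map T) = T (barycenter l) := by
  rw [barycenter, barycenter, map_smul, map_list_sum, List.length_map]

theorem barycenter_eq_of_perm {l l' : List V} (h : l.Perm l') : barycenter l = barycenter l' := by
  rw [barycenter, barycenter, h.length_eq, h.sum_eq]

theorem barycenter_cons (v : V) {l : List V} (hl : l ≠ []) :
    barycenter (v :: l) =
      AffineMap.lineMap v (barycenter l) (1 - ((v :: l).length : ℝ)⁻¹) := by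
  have hl' : (l.length : ℝ) ≠ 0 := by simpa using hl
  have hcoeff : (1 - (l.length + 1 : ℝ)⁻¹) * (l.length : ℝ)⁻¹ = (l.length + 1 : ℝ)⁻¹ := by
    field_simp
    ring
  rw [AffineMap.lineMap_apply_module, barycenter, barycenter, smul_smul, List.sum_cons,
    List.length_cons, Nat.cast_add_one, hcoeff, sub_sub_cancel, smul_add]

theorem barycenter_mem_convexHull {l : List V} (hl : l ≠ []) :
    barycenter l ∈ convexHull ℝ {v | v ∈ l} := by
  induction l with
  | nil => exact absurd rfl hl
  | cons v l ih =>
    rcases eq_or_ne l [] with rfl | hne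
    · simp [barycenter]
    have hv : v ∈ convexHull ℝ {w | w ∈ v :: l} := subset_convexHull ℝ _ (by simp)
    have hbary := convexHull_mono (fun w => List.mem_cons_of_mem v) (ih hne)
    rw [barycenter_cons v hne]
    refine (convex_convexHull ℝ _).lineMap_mem hv hbary ⟨?_, ?_⟩
    · exact sub_nonneg.2 (Nat.cast_inv_le_one _)
    · exact sub_le_self _ (by positivity)

end Hull

namespace OrderedChain

variable {R : Type*} [Ring R]

theorem IsTower.cyclicDifferential_boundary_eq_zero {X : Type*} {p k : ℕ} {t : X → X}
    {P : Set (List X)} {z : OrderedChain R X} (ht : t^[p] = id) (h : IsTower R p t P k z) :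
    cyclicDifferential p (map t) k (boundary z) = 0 := by
  cases h with
  | base hz hbd => simp [cyclicDifferential_of_even, hbd]
  | step h hz' hbd =>
    rw [hbd, ← Module.End.mul_apply, cyclicDifferential_succ_mul (map_pow_eq_one ht),
      LinearMap.zero_apply]

variable (R) in
theorem exists_isTower_zero_notMem_convexHull {V : Type*} [AddCommGroup V] [Module ℝ V]
    {p k : ℕ} {T : V ≃ₗ[ℝ] V} (hT : T^[p] = id) (hk : k < finrank ℝ V) :
    ∃ z, IsTower R p T {l : List V | 0 ∉ convexHull ℝ {v | v ∈ l}} k z := by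
  set P := {l : List V | 0 ∉ convexHull ℝ {v | v ∈ l}}
  have hPT : ∀ l ∈ P, l.map T ∈ P := fun l hl => zero_notMem_convexHull_map hl
  induction k with
  | zero =>
    obtain ⟨c, hc⟩ := exists_forall_notMem_span (V := V) (Q := {[]}) (by simpa using hk)
    refine ⟨single [c] 1, .base (single_mem_chains ?_ rfl 1) (by simp [boundary_single_cons])⟩
    simpa [P, eq_comm] using hc
  | succ k ih =>
    obtain ⟨z, hz⟩ := ih (by omega)
    set d := cyclicDifferential p (map T) k z
    have hd : d ∈ chains R P (k + 1) :=
      cyclicDifferential_apply_mem (M := OrderedChain R V) (chains_le_comap_map hPT) hz.mem_chains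
    have hd_support := (mem_supported _ _).1 hd
    obtain ⟨c, hc⟩ := exists_forall_notMem_span (Q := d.support)
      fun l hl => by rwa [(hd_support hl).2]
    have hcone : cone c d ∈ chains R P (k + 2) := by
      refine cone_mem_chains (P := {l ∈ P | c ∉ Submodule.span ℝ {v | v ∈ l}}) (fun l hl => ?_)
        ((mem_supported _ _).2 fun l hl => ⟨⟨(hd_support hl).1, hc l hl⟩, (hd_support hl).2⟩)
      have hinsert : {v | v ∈ c :: l} = insert c {v | v ∈ l} := by ext; simp
      have := zero_notMem_convexHull_insert hl.2 hl.1
      rwa [← hinsert] at this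
    refine ⟨cone c d, .step hz hcone ?_⟩
    rw [boundary_cone, cyclicDifferential_boundary, hz.cyclicDifferential_boundary_eq_zero hT,
      map_zero, sub_zero]

end OrderedChain

/-! ### Mesh of iterated barycentric subdivisions -/

section Mesh

open OrderedChain

variable {V : Type*} [NormedAddCommGroup V] [NormedSpace ℝ V] {N : ℕ} {D : ℝ}

theorem dist_barycenter_le {l : List V} {v : V} (hv : v ∈ l) (hN : l.length ≤ N)
    (hD : ∀ v ∈ l, ∀ w ∈ l, dist v w ≤ D) : dist v (barycenter l) ≤ (1 - (N : ℝ)⁻¹) * D := by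
  classical
  have hD0 : 0 ≤ D := dist_nonneg.trans (hD v hv v hv)
  have hl : 0 < l.length := List.length_pos_of_mem hv
  have hcoeff : 0 ≤ 1 - (l.length : ℝ)⁻¹ := sub_nonneg.2 (Nat.cast_inv_le_one _)
  have hperm := List.perm_cons_erase hv
  refine le_trans ?_ (mul_le_mul_of_nonneg_right (b := 1 - (l.length : ℝ)⁻¹) (by gcongr) hD0)
  rcases eq_or_ne (l.erase v) [] with hnil | hne
  · rw [hnil] at hperm
    rw [barycenter_eq_of_perm hperm]
    simpa [barycenter] using mul_nonneg hcoeff hD0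
  rw [barycenter_eq_of_perm hperm, barycenter_cons v hne, dist_left_lineMap, ← hperm.length_eq,
    Real.norm_of_nonneg hcoeff]
  refine mul_le_mul_of_nonneg_left ?_ hcoeff
  have : barycenter (l.erase v) ∈ closedBall v D :=
    convexHull_min (fun w hw => hD w (List.mem_of_mem_erase hw) v hv) (convex_closedBall v D)
      (barycenter_mem_convexHull hne)
  exact dist_comm v (barycenter _) ▸ this

namespace OrderedChain

theorem IsFlag.length_eq {X Y : Type*} {β : List X → Y} {l : List X} {L : List Y}
    (h : IsFlag β l L) : L.length = l.length := by
  induction h with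
  | nil => rfl
  | cons _ hlen _ ih => rw [List.length_cons, ih, hlen]

theorem IsFlag.mem_convexHull {l L : List V} (h : IsFlag barycenter l L) {v : V} (hv : v ∈ L) :
    v ∈ convexHull ℝ {w | w ∈ l} := by
  induction h with
  | nil => simp at hv
  | @cons l l' L hl hlen _ ih =>
    rcases List.mem_cons.1 hv with rfl | hv
    · exact barycenter_mem_convexHull (List.ne_nil_of_length_eq_add_one hlen.symm)
    · exact convexHull_mono (fun w hw => hl.subset hw) (ih hv)

theorem IsFlag.dist_le {l L : List V} (h : IsFlag barycenter l L) (hN : l.length ≤ N)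
    (hD : ∀ v ∈ l, ∀ w ∈ l, dist v w ≤ D) :
    ∀ v ∈ L, ∀ w ∈ L, dist v w ≤ (1 - (N : ℝ)⁻¹) * D := by
  induction h with
  | nil => simp
  | @cons l l' L hl hlen hL ih =>
    have hL_le : ∀ v ∈ L, ∀ w ∈ L, dist v w ≤ (1 - (N : ℝ)⁻¹) * D :=
      ih (hl.length_le.trans hN) fun v hv w hw => hD v (hl.subset hv) w (hl.subset hw)
    have hbary : ∀ v ∈ barycenter l :: L, dist v (barycenter l) ≤ (1 - (N : ℝ)⁻¹) * D := by
      intro v hv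
      have hball : convexHull ℝ {w | w ∈ l} ⊆ closedBall (barycenter l) ((1 - (N : ℝ)⁻¹) * D) :=
        convexHull_min (fun w hw => dist_barycenter_le hw hN hD) (convex_closedBall _ _)
      exact hball ((IsFlag.cons hl hlen hL).mem_convexHull hv)
    intro v hv w hw
    rcases List.mem_cons.1 hv with rfl | hv'
    · rw [dist_comm]
      exact hbary w hw
    rcases List.mem_cons.1 hw with rfl | hw'
    · exact hbary v hv
    · exact hL_le v hv' w hw'

variable {R : Type*} [Ring R] {p k : ℕ} {T : V →ₗ[ℝ] V} {z : OrderedChain R V}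

theorem IsTower.exists_dist_le {Q : Set (List V)} (hN : ∀ l ∈ Q, l.length ≤ N)
    (hD : ∀ l ∈ Q, ∀ v ∈ l, ∀ w ∈ l, dist v w ≤ D) (h : IsTower R p T Q k z) (j : ℕ) :
    ∃ z', IsTower R p T {L | (∃ l ∈ Q, ∀ v ∈ L, v ∈ convexHull ℝ {w | w ∈ l}) ∧
      ∀ v ∈ L, ∀ w ∈ L, dist v w ≤ (1 - (N : ℝ)⁻¹) ^ j * D} k z' := by
  suffices ∃ z', IsTower R p T {L | L.length ≤ N ∧
      (∃ l ∈ Q, ∀ v ∈ L, v ∈ convexHull ℝ {w | w ∈ l}) ∧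
      ∀ v ∈ L, ∀ w ∈ L, dist v w ≤ (1 - (N : ℝ)⁻¹) ^ j * D} k z' from
    this.imp fun z' hz' => hz'.mono fun L hL => hL.2
  induction j with
  | zero =>
    refine ⟨z, h.mono fun l hl => ⟨hN l hl, ⟨l, hl, fun v hv => subset_convexHull ℝ _ hv⟩, ?_⟩⟩
    simpa using hD l hl
  | succ j ih =>
    obtain ⟨z', hz'⟩ := ih
    refine ⟨_, hz'.subdivision (barycenter_map T) ?_⟩
    rintro l ⟨hlN, ⟨l₀, hl₀, hl⟩, hdist⟩ L hL
    refine ⟨hL.length_eq ▸ hlN, ⟨l₀, hl₀, fun v hv => ?_⟩, ?_⟩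
    · exact convexHull_min hl (convex_convexHull ℝ _) (hL.mem_convexHull hv)
    · rw [pow_succ', mul_assoc]
      exact hL.dist_le hlN hdist

theorem IsTower.exists_dist_lt {E : Type*} [PseudoMetricSpace E] {F : V → E} {S : Set V}
    (hF : ContinuousOn F S) (h : IsTower R p T {l | convexHull ℝ {v | v ∈ l} ⊆ S} k z)
    {δ : ℝ} (hδ : 0 < δ) :
    ∃ z', IsTower R p T
      {L | (∀ v ∈ L, v ∈ S) ∧ ∀ v ∈ L, ∀ w ∈ L, dist (F v) (F w) < δ} k z' := by
  obtain ⟨Q, hQS, hQ, hQz⟩ := h.exists_finite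
  obtain ⟨N, hN⟩ : ∃ N, ∀ l ∈ Q, l.length ≤ N := by
    simpa [BddAbove, Set.Nonempty, mem_upperBounds] using (hQ.image List.length).bddAbove
  set C := ⋃ l ∈ Q, convexHull ℝ {v | v ∈ l}
  have hC : IsCompact C := hQ.isCompact_biUnion fun l _ => l.finite_toSet.isCompact_convexHull ℝ
  have hQC : ∀ l ∈ Q, ∀ v ∈ l, v ∈ C := fun l hl v hv =>
    Set.mem_biUnion hl (subset_convexHull ℝ _ hv)
  have hCS : C ⊆ S := Set.iUnion₂_subset hQS
  obtain ⟨ε, hε, hFε⟩ := Metric.uniformContinuousOn_iff.1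
    (hC.uniformContinuousOn_of_continuous (hF.mono hCS)) δ hδ
  have hratio : (1 - ((N + 1 : ℕ) : ℝ)⁻¹) < 1 := sub_lt_self _ (by positivity)
  have hmesh := (tendsto_pow_atTop_nhds_zero_of_lt_one
    (sub_nonneg.2 (Nat.cast_inv_le_one _)) hratio).mul_const (diam C)
  rw [zero_mul] at hmesh
  obtain ⟨j, hj⟩ := (hmesh.eventually_lt_const hε).exists
  have hdiam : ∀ l ∈ Q, ∀ v ∈ l, ∀ w ∈ l, dist v w ≤ diam C := fun l hl v hv w hw =>
    dist_le_diam_of_mem hC.isBounded (hQC l hl v hv) (hQC l hl w hw)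
  obtain ⟨z', hz'⟩ := hQz.exists_dist_le (fun l hl => (hN l hl).trans N.le_succ) hdiam j
  refine ⟨z', hz'.mono ?_⟩
  rintro L ⟨⟨l, hl, hL⟩, hdist⟩
  have hLC : ∀ v ∈ L, v ∈ C := fun v hv => Set.mem_biUnion hl (hL v hv)
  exact ⟨fun v hv => hCS (hLC v hv), fun v hv w hw =>
    hFε v (hLC v hv) w (hLC w hw) ((hdist v hv w hw).trans_lt hj)⟩

end OrderedChain

end Mesh

/-! ### Flags of affine subspaces -/

section AffineFlag

variable {k V P : Type*} [DivisionRing k] [AddCommGroup V] [Module k V] [AddTorsor V P]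
  [FiniteDimensional k V]

theorem exists_eq_succ_of_monotone {L : ℕ → AffineSubspace k P}
    (hL : Monotone L) (hne : (L 0 : Set P).Nonempty) : ∃ n ≤ finrank k V, L n = L (n + 1) := by
  by_contra! h
  have hdim : ∀ n ≤ finrank k V + 1, n ≤ finrank k (L n).direction := by
    intro n hn
    induction n with
    | zero => exact Nat.zero_le _
    | succ n ih =>
      have hlt : L n < L (n + 1) := lt_of_le_of_ne (hL n.le_succ) (h n (by omega))
      have := Submodule.finrank_lt_finrank_of_lt
        (AffineSubspace.direction_lt_of_nonempty hlt (hne.mono (hL (Nat.zero_le n))))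
      have := ih (by omega)
      omega
  exact ((hdim _ le_rfl).trans (Submodule.finrank_le _)).not_gt (Nat.lt_succ_self _)

theorem length_le_finrank_direction {A : AffineSubspace k P} {L : List (AffineSubspace k P)}
    (hL : (A :: L).Pairwise (· > ·)) (hne : ∀ B ∈ A :: L, B ≠ ⊥) :
    L.length ≤ finrank k A.direction := by
  induction L generalizing A with
  | nil => exact Nat.zero_le _
  | cons B L ih =>
    have hBA : B < A := List.rel_of_pairwise_cons hL (by simp)
    have hB := (AffineSubspace.nonempty_iff_ne_bot B).2 (hne B (by simp))
    have hdim := Submodule.finrank_lt_finrank_of_lt (AffineSubspace.direction_lt_of_nonempty hBA hB)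
    have hlen := ih hL.of_cons fun C hC => hne C (by simp [List.mem_cons.1 hC])
    rw [List.length_cons]
    omega

end AffineFlag

section FixedPoint

variable {W : Type*} [AddCommGroup W] [Module ℝ W] {T : End ℝ W} {p : ℕ}

theorem iterate_affineSubspace_map_eq_id (hT : T ^ p = 1) :
    (AffineSubspace.map T.toAffineMap)^[p] = id := by
  have hsemi : Semiconj (SetLike.coe : AffineSubspace ℝ W → Set W)
      (AffineSubspace.map T.toAffineMap) (Set.image T) := fun A => rfl
  funext A
  refine SetLike.coe_injective ?_
  rw [(hsemi.iterate_right p).eq, ← Set.image_iterate_eq, ← Module.End.coe_pow, hT]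
  exact Set.image_id _

/-- The centroid of the `T`-orbit of any point of `A` lies in `A` and is fixed. -/
theorem zero_mem_of_map_eq (hp : p ≠ 0) (hT : T ^ p = 1) (hfix : ∀ w, T w = w → w = 0)
    {A : AffineSubspace ℝ W} (hne : A ≠ ⊥) (hA : A.map T.toAffineMap = A) : 0 ∈ A := by
  obtain ⟨a, ha⟩ := (AffineSubspace.nonempty_iff_ne_bot _).2 hne
  have horbit (j : ℕ) : (T ^ j) a ∈ A := by
    induction j with
    | zero => exact ha
    | succ j ih =>
      rw [pow_succ', Module.End.mul_apply, ← hA]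
      exact AffineSubspace.mem_map_of_mem T.toAffineMap ih
  have hcentroid : ∑ j ∈ range p, (p : ℝ)⁻¹ • (T ^ j) a ∈ A :=
    A.convex.sum_mem (fun _ _ => by positivity) (by simp [hp]) fun j _ => horbit j
  convert hcentroid
  refine (hfix _ (sub_eq_zero.1 ?_)).symm
  have hnorm := LinearMap.congr_fun (mul_geom_sum T p) a
  rw [hT, sub_self] at hnorm
  rw [← Finset.smul_sum, map_smul, ← smul_sub]
  simpa [hp] using hnorm

end FixedPoint

namespace OrderedChain

theorem pairwise_gt_of_not_isDegenerate {X : Type*} [PartialOrder X] {l : List X}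
    (hl : l.Pairwise (· ≥ ·)) (hdeg : ¬ IsDegenerate l) : l.Pairwise (· > ·) := by
  induction l with
  | nil => exact .nil
  | cons x l ih =>
    have hl' := ih hl.of_cons fun h => hdeg (.cons x h)
    refine List.isChain_iff_pairwise.1 ?_
    cases l with
    | nil => exact .singleton x
    | cons y l =>
      have hne : y ≠ x := by
        rintro rfl
        exact hdeg (.head y l)
      exact .cons_cons (lt_of_le_of_ne (List.rel_of_pairwise_cons hl (by simp)) hne)
        (List.isChain_iff_pairwise.2 hl')

section Supremum

variable {X α : Type*} [CompleteLattice α] {a : X → α} {l : List X} {L : List α}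

theorem IsFlag.le_iSup (h : IsFlag (fun l => ⨆ v ∈ l, a v) l L) {b : α} (hb : b ∈ L) :
    b ≤ ⨆ v ∈ l, a v := by
  induction h with
  | nil => simp at hb
  | cons hl _ _ ih =>
    rcases List.mem_cons.1 hb with rfl | hb
    · exact le_rfl
    · exact (ih hb).trans (biSup_mono fun v hv => hl.subset hv)

theorem IsFlag.pairwise_ge (h : IsFlag (fun l => ⨆ v ∈ l, a v) l L) : L.Pairwise (· ≥ ·) := by
  induction h with
  | nil => exact .nil
  | cons hl _ hL ih =>
    exact .cons (fun b hb => (hL.le_iSup hb).trans (biSup_mono fun v hv => hl.subset hv)) ih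

theorem IsFlag.exists_eq (h : IsFlag (fun l => ⨆ v ∈ l, a v) l L)
    (ha : ∀ v ∈ l, ∀ w ∈ l, a v ≤ a w ∨ a w ≤ a v) {b : α} (hb : b ∈ L) : ∃ v ∈ l, b = a v := by
  induction h with
  | nil => simp at hb
  | @cons l l' L hl hlen _ ih =>
    rcases List.mem_cons.1 hb with rfl | hb
    · have hne : {v | v ∈ l}.Nonempty :=
        List.exists_mem_of_ne_nil l (List.ne_nil_of_length_eq_add_one hlen.symm)
      obtain ⟨v, hv, hmax⟩ := l.finite_toSet.exists_maximalFor a _ hne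
      refine ⟨v, hv, le_antisymm (iSup₂_le fun w hw => ?_) (le_iSup₂_of_le v hv le_rfl)⟩
      exact (ha w hw v hv).elim id (hmax hw)
    · obtain ⟨v, hv, rfl⟩ := ih (fun v hv w hw => ha v (hl.subset hv) w (hl.subset hw)) hb
      exact ⟨v, hl.subset hv, rfl⟩

end Supremum

end OrderedChain

/-! ### Labelling the sphere by affine subspaces -/

section Target

open Filter Topology
open scoped RealInnerProductSpace

variable {W : Type*} [NormedAddCommGroup W] [InnerProductSpace ℝ W] {U : Set W} {s s' η R : ℝ}
  {x y : W}

theorem exists_finite_invariant_forall_inner_pos [FiniteDimensional ℝ W] {T : W ≃ₗᵢ[ℝ] W}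
    (hT : IsOfFinOrder T) :
    ∃ U : Set W, U.Finite ∧ (∀ u, T u ∈ U ↔ u ∈ U) ∧ ∀ x ≠ 0, ∃ u ∈ U, 0 < ⟪x, u⟫ := by
  set b := stdOrthonormalBasis ℝ W
  set B : Set W := Set.range b ∪ Set.range fun i => -b i
  have hB : B.Finite := (Set.finite_range _).union (Set.finite_range _)
  refine ⟨{u | ∃ g ∈ Subgroup.zpowers T, g u ∈ B}, ?_, fun u => ⟨?_, ?_⟩, fun x hx => ?_⟩
  · have hfin := hT.finite_zpowers.biUnion fun g _ => hB.preimage g.injective.injOn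
    exact hfin.subset fun u ⟨g, hg, hu⟩ => Set.mem_biUnion hg hu
  · rintro ⟨g, hg, hu⟩
    exact ⟨g * T, mul_mem hg (Subgroup.mem_zpowers T), hu⟩
  · rintro ⟨g, hg, hu⟩
    exact ⟨g * T⁻¹, mul_mem hg (inv_mem (Subgroup.mem_zpowers T)), by simpa using hu⟩
  · obtain ⟨i, hi⟩ : ∃ i, ⟪x, b i⟫ ≠ 0 := by
      by_contra! h
      exact hx (InnerProductSpace.ext_inner_right_basis b.toBasis fun i => by simpa using h i)
    rcases hi.lt_or_gt with hneg | hpos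
    · exact ⟨-b i, ⟨1, one_mem _, .inr ⟨i, rfl⟩⟩, by simpa using hneg⟩
    · exact ⟨b i, ⟨1, one_mem _, .inl ⟨i, rfl⟩⟩, hpos⟩

/-- The points of `U` at which `⟪x, ·⟫` is within `s` of its maximum over `U`. For `s = 0` these are
the points of `U` on the face of its convex hull exposed by `x`. -/
def nearMaximizers (U : Set W) (s : ℝ) (x : W) : Set W :=
  {u ∈ U | ∀ u' ∈ U, ⟪x, u'⟫ ≤ ⟪x, u⟫ + s}

theorem nearMaximizers_mono (h : s ≤ s') : nearMaximizers U s x ⊆ nearMaximizers U s' x :=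
  fun _ hu => ⟨hu.1, fun u' hu' => (hu.2 u' hu').trans (by gcongr)⟩

theorem nearMaximizers_subset_of_dist_le (hR : ∀ u ∈ U, ‖u‖ ≤ R) (h : 2 * R * dist x y ≤ η) :
    nearMaximizers U s x ⊆ nearMaximizers U (s + η) y := by
  refine fun u hu => ⟨hu.1, fun u' hu' => ?_⟩
  have hinner (w : W) (hw : w ∈ U) : |⟪x, w⟫ - ⟪y, w⟫| ≤ R * dist x y := by
    rw [← inner_sub_left, dist_eq_norm, mul_comm R]
    exact (abs_real_inner_le_norm _ _).trans (by gcongr; exact hR w hw)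
  have hu_near := abs_le.1 (hinner u hu.1)
  have hu'_near := abs_le.1 (hinner u' hu')
  linarith [hu.2 u' hu']

theorem nearMaximizers_nonempty (hU : U.Finite) (hne : U.Nonempty) (hs : 0 ≤ s) :
    (nearMaximizers U s x).Nonempty := by
  obtain ⟨u, hu, hmax⟩ := Set.exists_max_image U (fun u => ⟪x, u⟫) hU hne
  exact ⟨u, hu, fun u' hu' => (hmax u' hu').trans (le_add_of_nonneg_right hs)⟩

theorem nearMaximizers_map {T : W ≃ₗᵢ[ℝ] W} (hTU : ∀ u, T u ∈ U ↔ u ∈ U) :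
    nearMaximizers U s (T x) = T '' nearMaximizers U s x := by
  ext u
  obtain ⟨u, rfl⟩ := T.surjective u
  rw [T.injective.mem_set_image]
  refine and_congr (hTU u) (T.surjective.forall.trans (forall_congr' fun u' => ?_))
  rw [hTU, T.inner_map_map, T.inner_map_map]

theorem eventually_nearMaximizers_subset (hU : U.Finite) (x : W) :
    ∀ᶠ z : ℝ × W in 𝓝 (0, x), nearMaximizers U z.1 z.2 ⊆ nearMaximizers U 0 x := by
  have hlt (u u' : W) (h : ⟪x, u⟫ < ⟪x, u'⟫) :
      ∀ᶠ z : ℝ × W in 𝓝 (0, x), ⟪z.2, u⟫ + z.1 < ⟪z.2, u'⟫ := by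
    refine ContinuousAt.eventually_lt (by fun_prop) (by fun_prop) ?_
    simpa using h
  have hall : ∀ᶠ z : ℝ × W in 𝓝 (0, x), ∀ u ∈ U, ∀ u' ∈ U, ⟪x, u⟫ < ⟪x, u'⟫ →
      ⟪z.2, u⟫ + z.1 < ⟪z.2, u'⟫ := by
    simp only [eventually_all_finite hU, eventually_all]
    exact fun u _ u' _ => hlt u u'
  filter_upwards [hall] with z hz u hu
  refine ⟨hu.1, fun u' hu' => ?_⟩
  by_contra! h
  exact (hu.2 u' hu').not_gt (hz u hu.1 u' hu' (by simpa using h))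

/-- The affine span of the near-maximizers of `⟪x, ·⟫` on `U`. -/
def faceSpan (U : Set W) (s : ℝ) (x : W) : AffineSubspace ℝ W :=
  affineSpan ℝ (nearMaximizers U s x)

theorem faceSpan_mono (h : s ≤ s') : faceSpan U s x ≤ faceSpan U s' x :=
  affineSpan_mono ℝ (nearMaximizers_mono h)

theorem faceSpan_map {T : W ≃ₗᵢ[ℝ] W} (hTU : ∀ u, T u ∈ U ↔ u ∈ U) :
    faceSpan U s (T x) = (faceSpan U s x).map T.toLinearEquiv.toLinearMap.toAffineMap := by
  rw [faceSpan, faceSpan, AffineSubspace.map_span, nearMaximizers_map hTU]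
  rfl

theorem zero_notMem_faceSpan_zero (hpos : ∃ u ∈ U, 0 < ⟪x, u⟫) : 0 ∉ faceSpan U 0 x := by
  obtain ⟨u₀, hu₀, hu₀_pos⟩ := hpos
  intro h
  obtain ⟨u₁, hu₁⟩ := (affineSpan_nonempty ℝ).1 ⟨0, h⟩
  have hconst : ∀ w ∈ faceSpan U 0 x, ⟪x, w⟫ = ⟪x, u₁⟫ := by
    intro w hw
    refine affineSpan_induction hw (fun u hu => ?_) fun c u v w hu hv hw => ?_
    · linarith [hu.2 u₁ hu₁.1, hu₁.2 u hu.1]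
    · simp [inner_add_right, inner_smul_right, inner_sub_right, hu, hv, hw]
  have hzero := hconst 0 h
  rw [inner_zero_right] at hzero
  linarith [hu₁.2 u₀ hu₀]

theorem exists_forall_sphere_zero_notMem_faceSpan [FiniteDimensional ℝ W] (hU : U.Finite)
    (hpos : ∀ x ≠ 0, ∃ u ∈ U, 0 < ⟪x, u⟫) :
    ∃ s > 0, ∀ x ∈ sphere (0 : W) 1, 0 ∉ faceSpan U s x := by
  have hlocal : ∀ x ∈ sphere (0 : W) 1, ∀ᶠ z : ℝ × W in 𝓝 (0, x), 0 ∉ faceSpan U z.1 z.2 := by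
    intro x hx
    filter_upwards [eventually_nearMaximizers_subset hU x] with z hz hmem
    exact zero_notMem_faceSpan_zero (hpos x (ne_zero_of_mem_unit_sphere ⟨x, hx⟩))
      (affineSpan_mono ℝ hz hmem)
  have hev := (isCompact_sphere (0 : W) 1).eventually_forall_of_forall_eventually
    (P := fun s x => 0 ∉ faceSpan U s x) hlocal
  have := (hev.filter_mono nhdsWithin_le_nhds).and (self_mem_nhdsWithin (s := Set.Ioi (0 : ℝ)))
  obtain ⟨s, hs, hs0⟩ := this.exists
  exact ⟨s, hs0, hs⟩

/-- The face span of `x` for the first tolerance in `0, η, 2η, …` at which one more step of size `η`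
does not enlarge it. -/
noncomputable def stableFaceSpan (U : Set W) (η : ℝ) (x : W) : AffineSubspace ℝ W :=
  faceSpan U
    (sInf {k : ℕ | faceSpan U (k * η) x = faceSpan U ((k + 1 : ℕ) * η) x} * η) x

theorem stableFaceSpan_map {T : W ≃ₗᵢ[ℝ] W} (hTU : ∀ u, T u ∈ U ↔ u ∈ U) :
    stableFaceSpan U η (T x) =
      (stableFaceSpan U η x).map T.toLinearEquiv.toLinearMap.toAffineMap := by
  have hinj : Injective (AffineSubspace.map T.toLinearEquiv.toLinearMap.toAffineMap) :=
    fun A B h => SetLike.coe_injective (T.injective.image_injective (congrArg SetLike.coe h))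
  simp only [stableFaceSpan, faceSpan_map hTU, hinj.eq_iff]

theorem stableFaceSpan_ne_bot (hU : U.Finite) (hne : U.Nonempty) (hη : 0 ≤ η) :
    stableFaceSpan U η x ≠ ⊥ :=
  (AffineSubspace.nonempty_iff_ne_bot _).1 <|
    (affineSpan_nonempty ℝ).2 (nearMaximizers_nonempty hU hne (by positivity))

variable [FiniteDimensional ℝ W]

theorem exists_stableFaceSpan_eq (hU : U.Finite) (hne : U.Nonempty) (hη : 0 ≤ η) (x : W) :
    ∃ k ≤ finrank ℝ W, stableFaceSpan U η x = faceSpan U (k * η) x ∧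
      faceSpan U (k * η) x = faceSpan U ((k + 1 : ℕ) * η) x := by
  have hmono : Monotone fun k : ℕ => faceSpan U (k * η) x := fun j k hjk =>
    faceSpan_mono (by gcongr)
  obtain ⟨k, hk, hstable⟩ := exists_eq_succ_of_monotone hmono
    ((affineSpan_nonempty ℝ).2 (nearMaximizers_nonempty hU hne (by simp)))
  set S := {k : ℕ | faceSpan U (k * η) x = faceSpan U ((k + 1 : ℕ) * η) x}
  have hkS : k ∈ S := hstable
  exact ⟨sInf S, (Nat.sInf_le hkS).trans hk, rfl, Nat.sInf_mem ⟨k, hkS⟩⟩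

theorem stableFaceSpan_le_or_le (hU : U.Finite) (hne : U.Nonempty) (hη : 0 ≤ η)
    (hR : ∀ u ∈ U, ‖u‖ ≤ R) (hxy : 2 * R * dist x y ≤ η) :
    stableFaceSpan U η x ≤ stableFaceSpan U η y ∨ stableFaceSpan U η y ≤ stableFaceSpan U η x := by
  have key {x y : W} (hxy : 2 * R * dist x y ≤ η) {j k : ℕ} (hjk : j ≤ k)
      (hstable : faceSpan U (k * η) y = faceSpan U ((k + 1 : ℕ) * η) y) :
      faceSpan U (j * η) x ≤ faceSpan U (k * η) y := by
    rw [hstable]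
    refine (affineSpan_mono ℝ (nearMaximizers_subset_of_dist_le hR hxy)).trans (faceSpan_mono ?_)
    push_cast
    rw [add_one_mul]
    gcongr
  obtain ⟨j, -, hj, hjx⟩ := exists_stableFaceSpan_eq hU hne hη x
  obtain ⟨k, -, hk, hky⟩ := exists_stableFaceSpan_eq hU hne hη y
  rw [hj, hk]
  rcases le_total j k with hjk | hkj
  · exact .inl (key hxy hjk hky)
  · exact .inr (key (dist_comm x y ▸ hxy) hkj hjx)

theorem stableFaceSpan_le_faceSpan (hU : U.Finite) (hne : U.Nonempty) (hη : 0 ≤ η) :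
    stableFaceSpan U η x ≤ faceSpan U (finrank ℝ W * η) x := by
  obtain ⟨k, hk, heq, -⟩ := exists_stableFaceSpan_eq hU hne hη x
  rw [heq]
  exact faceSpan_mono (by gcongr)

theorem exists_flagLabelling {T : W ≃ₗᵢ[ℝ] W} (hT : IsOfFinOrder T) [Nontrivial W] :
    ∃ (A : W → AffineSubspace ℝ W) (δ : ℝ), 0 < δ ∧
      (∀ x, A (T x) = (A x).map T.toLinearEquiv.toLinearMap.toAffineMap) ∧
      (∀ x ∈ sphere (0 : W) 1, A x ≠ ⊥ ∧ 0 ∉ A x) ∧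
      ∀ x y, dist x y < δ → A x ≤ A y ∨ A y ≤ A x := by
  obtain ⟨U, hU, hTU, hpos⟩ := exists_finite_invariant_forall_inner_pos hT
  obtain ⟨x₀, hx₀⟩ := exists_ne (0 : W)
  have hne : U.Nonempty := (hpos x₀ hx₀).imp fun u hu => hu.1
  obtain ⟨s, hs, hzero⟩ := exists_forall_sphere_zero_notMem_faceSpan hU hpos
  obtain ⟨R, hR0, hR⟩ := hU.isBounded.exists_pos_norm_le
  set η := s / (finrank ℝ W + 1)
  have hη : 0 < η := by positivity
  have hηs : finrank ℝ W * η ≤ s := by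
    rw [mul_div_left_comm]
    exact mul_le_of_le_one_right hs.le (div_le_one_of_le₀ (by linarith) (by positivity))
  refine ⟨stableFaceSpan U η, η / (2 * R), by positivity, fun x => stableFaceSpan_map hTU,
    fun x hx => ⟨stableFaceSpan_ne_bot hU hne hη.le, fun hmem => hzero x hx ?_⟩, fun x y hxy => ?_⟩
  · exact faceSpan_mono hηs (stableFaceSpan_le_faceSpan hU hne hη.le hmem)
  · exact stableFaceSpan_le_or_le hU hne hη.le hR ((le_div_iff₀' (by positivity)).1 hxy.le)

end Target

section ProperFlags

open OrderedChain

variable {W : Type*} [AddCommGroup W] [Module ℝ W] {p : ℕ} {T : End ℝ W}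
  {L : List (AffineSubspace ℝ W)}

variable (W) in
/-- The decreasing sequences, with repetitions allowed, of nonempty affine subspaces that avoid the
origin. -/
def properFlags : Set (List (AffineSubspace ℝ W)) :=
  {L | (∀ A ∈ L, A ≠ ⊥ ∧ 0 ∉ A) ∧ L.Pairwise (· ≥ ·)}

theorem map_mem_properFlags (hp : p ≠ 0) (hT : T ^ p = 1) (hL : L ∈ properFlags W) :
    L.map (AffineSubspace.map T.toAffineMap) ∈ properFlags W := by
  have hinj : Injective T :=
    ((Module.End.isUnit_iff T).1 (IsUnit.of_pow_eq_one hT hp)).injective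
  refine ⟨List.forall_mem_map.2 fun A hA => ⟨?_, ?_⟩, ?_⟩
  · exact mt (AffineSubspace.map_eq_bot_iff _).1 (hL.1 A hA).1
  · rintro ⟨w, hw, hw0⟩
    obtain rfl : w = 0 := hinj (hw0.trans (map_zero T).symm)
    exact (hL.1 A hA).2 hw
  · exact hL.2.map _ fun A B hAB => AffineSubspace.map_mono _ hAB

theorem sublist_mem_properFlags {L' : List (AffineSubspace ℝ W)} (hL : L ∈ properFlags W)
    (h : L'.Sublist L) : L' ∈ properFlags W :=
  ⟨fun A hA => hL.1 A (h.subset hA), hL.2.sublist h⟩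

theorem minimalPeriod_of_mem_properFlags (hp : p.Prime) (hT : T ^ p = 1)
    (hfix : ∀ w, T w = w → w = 0) (hL : L ∈ properFlags W) (hne : L ≠ []) :
    minimalPeriod (List.map (AffineSubspace.map T.toAffineMap)) L = p := by
  have := Fact.mk hp
  refine minimalPeriod_eq_prime ?_ fun hfixed => ?_
  · rw [IsPeriodicPt, iterate_list_map, iterate_affineSubspace_map_eq_id hT, List.map_id_fun]
    rfl
  · cases L with
    | nil => exact hne rfl
    | cons A L =>
      have hA := hL.1 A (by simp)
      exact hA.2 (zero_mem_of_map_eq hp.ne_zero hT hfix hA.1 (List.cons.inj hfixed).1)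

theorem length_le_finrank_of_mem_properFlags [FiniteDimensional ℝ W] (hL : L ∈ properFlags W)
    (hdeg : ¬ IsDegenerate L) : L.length ≤ finrank ℝ W := by
  cases L with
  | nil => exact Nat.zero_le _
  | cons A L =>
    have hA := hL.1 A (by simp)
    have hA_ne_top : A ≠ ⊤ := by
      rintro rfl
      exact hA.2 (AffineSubspace.mem_top _ _ _)
    have hdir : A.direction ≠ ⊤ := mt (AffineSubspace.direction_eq_top_iff_of_nonempty
      ((AffineSubspace.nonempty_iff_ne_bot A).2 hA.1)).1 hA_ne_top
    exact (length_le_finrank_direction (pairwise_gt_of_not_isDegenerate hL.2 hdeg)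
      fun B hB => (hL.1 B hB).1).trans_lt (Submodule.finrank_lt hdir)

theorem not_isTower_properFlags [FiniteDimensional ℝ W] (hp : p.Prime) (hT : T ^ p = 1)
    (hfix : ∀ w, T w = w → w = 0) (z : OrderedChain (ZMod p) (AffineSubspace ℝ W)) :
    ¬ IsTower (ZMod p) p (AffineSubspace.map T.toAffineMap) (properFlags W) (finrank ℝ W) z := by
  have := Fact.mk hp
  intro hz
  obtain ⟨L, hL, hlen, hdeg⟩ := hz.exists_not_isDegenerate hp.ne_zero
    (iterate_affineSubspace_map_eq_id hT)
    (fun L hL => map_mem_properFlags hp.ne_zero hT hL)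
    (fun L hL L' h => sublist_mem_properFlags hL h)
    (fun L hL hne => minimalPeriod_of_mem_properFlags hp hT hfix hL hne)
  have := length_le_finrank_of_mem_properFlags hL hdeg
  omega

end ProperFlags

section BorsukUlam

open OrderedChain

variable {R V W : Type*} [Ring R] [NormedAddCommGroup V] [NormedSpace ℝ V]

theorem iterate_eq_id_of_pow_eq_one {T : V ≃ₗᵢ[ℝ] V} {p : ℕ} (hT : T ^ p = 1) : T^[p] = id := by
  rw [← hom_coe_pow (fun e : V ≃ₗᵢ[ℝ] V => (e : V → V)) rfl (fun _ _ => rfl), hT]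
  rfl

theorem toLinearMap_pow_eq_one {T : V ≃ₗᵢ[ℝ] V} {p : ℕ} (hT : T ^ p = 1) :
    (T.toLinearEquiv.toLinearMap : End ℝ V) ^ p = 1 :=
  DFunLike.coe_injective ((Module.End.coe_pow _ p).trans (iterate_eq_id_of_pow_eq_one hT))

theorem exists_equivariant_radial_extension [NormedAddCommGroup W] [NormedSpace ℝ W]
    {T₁ : V ≃ₗᵢ[ℝ] V} {T₂ : W ≃ₗᵢ[ℝ] W} {f : V → W} (hf : ContinuousOn f (sphere 0 1))
    (hmaps : ∀ x ∈ sphere (0 : V) 1, f x ∈ sphere (0 : W) 1)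
    (hequiv : ∀ x ∈ sphere (0 : V) 1, f (T₁ x) = T₂ (f x)) :
    ∃ F : V → W, ContinuousOn F {0}ᶜ ∧ (∀ v ≠ 0, F v ∈ sphere (0 : W) 1) ∧
      ∀ v, F (T₁ v) = T₂ (F v) := by
  classical
  have hsphere : ∀ v ≠ (0 : V), ‖v‖⁻¹ • v ∈ sphere (0 : V) 1 := fun v hv => by
    simp [norm_smul, hv]
  have hF {v : V} (hv : v ≠ 0) : (if v = 0 then 0 else f (‖v‖⁻¹ • v)) = f (‖v‖⁻¹ • v) := if_neg hv
  refine ⟨fun v => if v = 0 then 0 else f (‖v‖⁻¹ • v), ?_, fun v hv => ?_, fun v => ?_⟩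
  · have hradial : ContinuousOn (fun v : V => ‖v‖⁻¹ • v) {0}ᶜ :=
      (continuousOn_id.norm.inv₀ fun v hv => norm_ne_zero_iff.2 hv).smul continuousOn_id
    exact (hf.comp hradial hsphere).congr fun v hv => hF hv
  · simpa only [hF hv] using hmaps _ (hsphere v hv)
  · rcases eq_or_ne v 0 with rfl | hv
    · simp
    · simpa [hv] using hequiv _ (hsphere v hv)

variable [NormedAddCommGroup W] [InnerProductSpace ℝ W] [FiniteDimensional ℝ W]

variable (R) in
theorem exists_isTower_properFlags {p : ℕ} (hp : p ≠ 0) (h : finrank ℝ W < finrank ℝ V)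
    {T₁ : V ≃ₗᵢ[ℝ] V} {T₂ : W ≃ₗᵢ[ℝ] W} (hT₁ : T₁ ^ p = 1) (hT₂ : T₂ ^ p = 1)
    {f : V → W} (hf : ContinuousOn f (sphere 0 1))
    (hmaps : ∀ x ∈ sphere (0 : V) 1, f x ∈ sphere (0 : W) 1)
    (hequiv : ∀ x ∈ sphere (0 : V) 1, f (T₁ x) = T₂ (f x)) :
    ∃ z, IsTower R p (AffineSubspace.map T₂.toLinearEquiv.toLinearMap.toAffineMap)
      (properFlags W) (finrank ℝ W) z := by
  obtain ⟨F, hF, hFmaps, hFequiv⟩ := exists_equivariant_radial_extension hf hmaps hequiv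
  have : Nontrivial V := nontrivial_of_finrank_pos (R := ℝ) (Nat.zero_lt_of_lt h)
  obtain ⟨v₀, hv₀⟩ := exists_ne (0 : V)
  have : Nontrivial W := nontrivial_of_ne _ _ (ne_zero_of_mem_unit_sphere ⟨F v₀, hFmaps v₀ hv₀⟩)
  obtain ⟨A, δ, hδ, hAmap, hA, hAδ⟩ :=
    exists_flagLabelling (isOfFinOrder_iff_pow_eq_one.2 ⟨p, Nat.pos_of_ne_zero hp, hT₂⟩)
  obtain ⟨z, hz⟩ := exists_isTower_zero_notMem_convexHull R (T := T₁.toLinearEquiv)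
    (iterate_eq_id_of_pow_eq_one hT₁) h
  obtain ⟨z', hz'⟩ := IsTower.exists_dist_lt (T := T₁.toLinearEquiv.toLinearMap) hF
    (hz.mono fun l hl v hv hv0 => hl (hv0 ▸ hv)) hδ
  refine ⟨_, hz'.subdivision (β := fun l => ⨆ v ∈ l, A (F v)) (fun l => ?_) ?_⟩
  · simp only [LinearEquiv.coe_coe, LinearIsometryEquiv.coe_toLinearEquiv, AffineSubspace.map_iSup,
      ← hAmap, ← hFequiv, List.mem_map, iSup_exists, iSup_and, iSup_comm (ι := V),
      iSup_iSup_eq_right]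
  · rintro l ⟨hl0, hlδ⟩ L hL
    refine ⟨fun B hB => ?_, hL.pairwise_ge⟩
    obtain ⟨v, hv, rfl⟩ := hL.exists_eq (fun v hv w hw => hAδ _ _ (hlδ v hv w hw)) hB
    exact hA _ (hFmaps v (hl0 v hv))

theorem borsukUlam_zmod_p_general {G : Type*} [Group G] [Finite G] [Nontrivial G]
    (h : finrank ℝ W < finrank ℝ V) (ρ₁ : G →* V ≃ₗᵢ[ℝ] V) (ρ₂ : G →* W ≃ₗᵢ[ℝ] W)
    (hfree₂ : ∀ g ≠ 1, ∀ w ≠ 0, ρ₂ g w ≠ w) :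
    ¬ ∃ f : V → W, ContinuousOn f (sphere 0 1) ∧
      (∀ x ∈ sphere (0 : V) 1, f x ∈ sphere (0 : W) 1) ∧
      ∀ g, ∀ x ∈ sphere (0 : V) 1, f (ρ₁ g x) = ρ₂ g (f x) := by
  rintro ⟨f, hf, hmaps, hequiv⟩
  obtain ⟨p, hp, hpG⟩ := Nat.exists_prime_and_dvd (Finite.one_lt_card (α := G)).ne'
  have := Fact.mk hp
  obtain ⟨g, hg⟩ := exists_prime_orderOf_dvd_card' p hpG
  have hg1 : g ≠ 1 := fun h1 => hp.one_lt.ne (by rw [← hg, h1, orderOf_one])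
  have hgp : g ^ p = 1 := hg ▸ pow_orderOf_eq_one g
  have hpow₁ : ρ₁ g ^ p = 1 := by rw [← map_pow, hgp, map_one]
  have hpow₂ : ρ₂ g ^ p = 1 := by rw [← map_pow, hgp, map_one]
  obtain ⟨z, hz⟩ := exists_isTower_properFlags (ZMod p) hp.ne_zero h hpow₁ hpow₂ hf hmaps (hequiv g)
  exact not_isTower_properFlags hp (toLinearMap_pow_eq_one hpow₂)
    (fun w hw => not_not.1 fun hw0 => hfree₂ g hg1 w hw0 hw) z hz

end BorsukUlam

/-- Borsuk–Ulam for `ℤ_p` actions: if a prime `p` acts freely by linear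
isometries on spheres `Sⁿ` and `Sᵐ` with `n > m`, there is no `ℤ_p`-equivariant
continuous map from `Sⁿ` to `Sᵐ`. -/
theorem borsukUlam_zmod_p {p n m : ℕ} (hp : p.Prime) (h : m < n)
    (ρ₁ : Multiplicative (ZMod p) →*
      (EuclideanSpace ℝ (Fin (n + 1)) ≃ₗᵢ[ℝ] EuclideanSpace ℝ (Fin (n + 1))))
    (ρ₂ : Multiplicative (ZMod p) →*
      (EuclideanSpace ℝ (Fin (m + 1)) ≃ₗᵢ[ℝ] EuclideanSpace ℝ (Fin (m + 1))))
    (hfree₁ : ∀ g : Multiplicative (ZMod p), g ≠ 1 →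
      ∀ v : EuclideanSpace ℝ (Fin (n + 1)), v ≠ 0 → ρ₁ g v ≠ v)
    (hfree₂ : ∀ g : Multiplicative (ZMod p), g ≠ 1 →
      ∀ v : EuclideanSpace ℝ (Fin (m + 1)), v ≠ 0 → ρ₂ g v ≠ v) :
    ¬ ∃ f : EuclideanSpace ℝ (Fin (n + 1)) → EuclideanSpace ℝ (Fin (m + 1)),
      ContinuousOn f (sphere (0 : EuclideanSpace ℝ (Fin (n + 1))) 1) ∧
      (∀ x ∈ sphere (0 : EuclideanSpace ℝ (Fin (n + 1))) 1,
        f x ∈ sphere (0 : EuclideanSpace ℝ (Fin (m + 1))) 1) ∧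
      (∀ g : Multiplicative (ZMod p), ∀ x ∈ sphere (0 : EuclideanSpace ℝ (Fin (n + 1))) 1,
        f (ρ₁ g x) = ρ₂ g (f x)) := by
  have := Fact.mk hp
  exact borsukUlam_zmod_p_general (by simpa using h) ρ₁ ρ₂ hfree₂
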